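/- arXiv:1704.05792 — 3 statements merged into one kernel-verified Lean document; each statement's English description precedes it below -/
import Mathlib

section
/- Theorem 4.1(e): If a locally finite partially ordered set satisfies Axiom VT and Axiom FT, then it satisfies Axiom D3⁻C and Axiom D3MF. -/
namespace DCompleteStmt

variable {α : Type*}

/-- A vee (d₃⁻-set) `{w; x, y}`: three distinct elements with `w ⋖ x` and `w ⋖ y`. -/
def IsVee [PartialOrder α] (w x y : α) : Prop :=
  x ≠ y ∧ w ⋖ x ∧ w ⋖ y

/-- A diamond `{w; x, y; z}`: four distinct elements with
`w ⋖ x`, `w ⋖ y`, `x ⋖ z`, `y ⋖ z`. -/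
def IsDiamond [PartialOrder α] (w x y z : α) : Prop :=
  x ≠ y ∧ w ⋖ x ∧ w ⋖ y ∧ x ⋖ z ∧ y ⋖ z

/-- A d₃-interval: an interval `[w,z]` that as a set equals a diamond `{w; x, y; z}`. -/
def IsD3Interval [PartialOrder α] (w x y z : α) : Prop :=
  IsDiamond w x y z ∧ Set.Icc w z = {w, x, y, z}

/-- Axiom VT: every vee has a top. -/
def AxVT (α : Type*) [PartialOrder α] : Prop :=
  ∀ w x y : α, IsVee w x y → ∃ z : α, x ⋖ z ∧ y ⋖ z

/-- Axiom NCC: there are no overlapping vees. -/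
def AxNCC (α : Type*) [PartialOrder α] : Prop :=
  ¬ ∃ w w' x y : α, w ≠ w' ∧ x ≠ y ∧ w ⋖ x ∧ w ⋖ y ∧ w' ⋖ x ∧ w' ⋖ y

/-- Property UT: every vee has exactly one top. -/
def PropUT (α : Type*) [PartialOrder α] : Prop :=
  ∀ w x y : α, IsVee w x y → ∃! z : α, x ⋖ z ∧ y ⋖ z

/-- Axiom D3⁻C: every vee has a completing element. -/
def AxD3C (α : Type*) [PartialOrder α] : Prop :=
  ∀ w x y : α, IsVee w x y → ∃ z : α, IsD3Interval w x y z

/-- Property NTC: no element is covered by three pairwise distinct elements. -/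
def PropNTC (α : Type*) [PartialOrder α] : Prop :=
  ¬ ∃ w x y u : α, x ≠ y ∧ x ≠ u ∧ y ≠ u ∧ w ⋖ x ∧ w ⋖ y ∧ w ⋖ u

/-- Property SS: every short interval has cardinality 3 or 4. -/
def PropSS (α : Type*) [PartialOrder α] : Prop :=
  ∀ w u z : α, w ⋖ u → u ⋖ z →
    (Set.Icc w z).ncard = 3 ∨ (Set.Icc w z).ncard = 4

/-- Axiom FT: the top of every diamond covers only the elbows of the diamond. -/
def AxFT (α : Type*) [PartialOrder α] : Prop :=
  ∀ w x y z : α, IsDiamond w x y z → ∀ u : α, u ⋖ z → u = x ∨ u = y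

/-- Axiom D3MF: the maximum of every d₃-interval covers only the elbows. -/
def AxD3MF (α : Type*) [PartialOrder α] : Prop :=
  ∀ w x y z : α, IsD3Interval w x y z → ∀ u : α, u ⋖ z → u = x ∨ u = y

/-- Axiom D3MD: two d₃-intervals with the same maximum element coincide as sets. -/
def AxD3MD (α : Type*) [PartialOrder α] : Prop :=
  ∀ w x y z w' x' y' : α, IsD3Interval w x y z → IsD3Interval w' x' y' z →
    ({w, x, y, z} : Set α) = {w', x', y', z}

/-- Axiom D3⁻CF: every vee has a completing element covering only the elbows. -/
def AxD3CF (α : Type*) [PartialOrder α] : Prop :=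
  ∀ w x y : α, IsVee w x y →
    ∃ z : α, IsD3Interval w x y z ∧ ∀ u : α, u ⋖ z → u = x ∨ u = y

/-- Property DAI: every diamond is an interval. -/
def PropDAI (α : Type*) [PartialOrder α] : Prop :=
  ∀ w x y z : α, IsDiamond w x y z → Set.Icc w z = {w, x, y, z}

/-- Property UC3: every vee has exactly one completing element. -/
def PropUC3 (α : Type*) [PartialOrder α] : Prop :=
  ∀ w x y : α, IsVee w x y → ∃! z : α, IsD3Interval w x y z

/-- Property UPUE: upward propagation of up edges. -/
def PropUPUE (α : Type*) [PartialOrder α] : Prop :=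
  ∀ w x y : α, w ≤ y → w ⋖ x → ¬ x ≤ y → ∃ z : α, y ⋖ z ∧ x ≤ z

/-- A covering chain `a = f 0 ⋖ f 1 ⋖ ⋯ ⋖ f n = b` of length `n`. -/
def IsCovChain [PartialOrder α] (f : ℕ → α) (n : ℕ) (a b : α) : Prop :=
  f 0 = a ∧ f n = b ∧ ∀ i < n, f i ⋖ f (i + 1)

/-- Connectedness via the Hasse diagram (covering graph). -/
def HasseConnected (α : Type*) [PartialOrder α] : Prop :=
  ∀ a b : α, Relation.ReflTransGen (fun u v : α => u ⋖ v ∨ v ⋖ u) a b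

/-- Property UM: a unique maximal element. -/
def PropUM (α : Type*) [PartialOrder α] : Prop :=
  ∃! z : α, IsMax z

/-- Property CLMEE: a unique maximal element, and all covering chains from any
element to it have equal length. -/
def PropCLMEE (α : Type*) [PartialOrder α] : Prop :=
  ∃ z : α, IsMax z ∧ (∀ z' : α, IsMax z' → z' = z) ∧
    ∀ (w : α) (n m : ℕ) (f g : ℕ → α),
      IsCovChain f n w z → IsCovChain g m w z → n = m

/-- The poset is ranked. -/
def IsRanked (α : Type*) [PartialOrder α] : Prop :=
  ∃ ρ : α → ℤ, ∀ x y : α, x ⋖ y → ρ y = ρ x + 1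

/-- Property CLE: whenever `x < y`, all covering chains from `x` to `y`
have equal length. -/
def PropCLE (α : Type*) [PartialOrder α] : Prop :=
  ∀ x y : α, x < y → ∀ (n m : ℕ) (f g : ℕ → α),
    IsCovChain f n x y → IsCovChain g m x y → n = m

/-!
Below the top `z` of a diamond every element lies under one covered by `z`, hence by FT under an
elbow; as the elbows cover `w`, nothing of `[w, z]` lies outside the diamond. So every diamond is
an interval, and the top of a vee provided by VT is a completing element.
-/

theorem Ico_eq_biUnion_covBy_Icc [Preorder α] [IsStronglyCoatomic α] (a b : α) :
    Set.Ico a b = ⋃ c ∈ {c | c ⋖ b}, Set.Icc a c := by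
  ext u
  simp only [Set.mem_Ico, Set.mem_iUnion, Set.mem_ofPred_eq, Set.mem_Icc, exists_prop]
  constructor
  · rintro ⟨hau, hub⟩
    obtain ⟨c, huc, hcb⟩ := exists_le_covBy_of_lt hub
    exact ⟨c, hcb, hau, huc⟩
  · rintro ⟨c, hcb, hau, huc⟩
    exact ⟨hau, huc.trans_lt hcb.lt⟩

section PartialOrder

variable [PartialOrder α]

theorem AxFT.ofPred_covBy_eq_pair (hFT : AxFT α) {w x y z : α} (h : IsDiamond w x y z) :
    {u | u ⋖ z} = {x, y} := by
  refine Set.Subset.antisymm (hFT w x y z h) ?_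
  obtain ⟨-, -, -, hxz, hyz⟩ := h
  rintro u (rfl | rfl)
  exacts [hxz, hyz]

theorem AxFT.propDAI [IsStronglyCoatomic α] (hFT : AxFT α) : PropDAI α := by
  intro w x y z h
  have ⟨_, hwx, hwy, hxz, _⟩ := h
  calc Set.Icc w z
      = insert z (Set.Ico w z) := (Set.Ico_insert_right (hwx.le.trans hxz.le)).symm
    _ = insert z (Set.Icc w x ∪ Set.Icc w y) := by
        rw [Ico_eq_biUnion_covBy_Icc, hFT.ofPred_covBy_eq_pair h, Set.biUnion_pair]
    _ = insert z ({w, x} ∪ {w, y}) := by rw [hwx.Icc_eq, hwy.Icc_eq]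
    _ = {w, x, y, z} := by grind

theorem AxFT.axD3MF (hFT : AxFT α) : AxD3MF α :=
  fun w x y z h => hFT w x y z h.1

theorem AxVT.axD3C (hVT : AxVT α) (hDAI : PropDAI α) : AxD3C α := by
  rintro w x y ⟨hne, hwx, hwy⟩
  obtain ⟨z, hxz, hyz⟩ := hVT w x y ⟨hne, hwx, hwy⟩
  have hdiamond : IsDiamond w x y z := ⟨hne, hwx, hwy, hxz, hyz⟩
  exact ⟨z, hdiamond, hDAI w x y z hdiamond⟩

theorem stmt_3_general [IsStronglyCoatomic α] (hVT : AxVT α) (hFT : AxFT α) :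
    AxD3C α ∧ AxD3MF α :=
  ⟨hVT.axD3C hFT.propDAI, hFT.axD3MF⟩

end PartialOrder

/-- Theorem 4.1(e): VT and FT imply D3⁻C and D3MF. -/
theorem stmt_3 {α : Type*} [PartialOrder α] (hLF : ∀ a b : α, (Set.Icc a b).Finite)
    (hVT : AxVT α) (hFT : AxFT α) : AxD3C α ∧ AxD3MF α := by
  let _ := LocallyFiniteOrder.ofFiniteIcc hLF
  exact stmt_3_general hVT hFT

end DCompleteStmt
end

section
/- Theorem 4.1(h): If a locally finite partially ordered set satisfies Axiom D3⁻C and Axiom D3MD and has Property NTC, then it satisfies Axiom NCC. -/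
namespace DCompleteStmt

variable {α : Type*}

/-!
In a diamond `{w; x, y; z}`, every element of `(w, z]` lies above a cover of `w`, which under NTC is
`x` or `y`; hence every diamond is an interval. A common top `z` of two overlapping vees
`{w; x, y}` and `{w'; x, y}` thus makes both `[w, z]` and `[w', z]` d₃-intervals, and D3MD forces
`w = w'`.
-/

section

variable [PartialOrder α] {w w' x x' y y' z u : α}

theorem AxD3C.axVT (hD3C : AxD3C α) : AxVT α := fun w x y hvee =>
  let ⟨z, ⟨_, _, _, hxz, hyz⟩, _⟩ := hD3C w x y hvee
  ⟨z, hxz, hyz⟩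

theorem AxD3MD.min_eq (hD3MD : AxD3MD α) (h : IsD3Interval w x y z)
    (h' : IsD3Interval w' x' y' z) : w = w' := by
  have hIcc : Set.Icc w z = Set.Icc w' z := by
    rw [h.2, h'.2]
    exact hD3MD _ _ _ _ _ _ _ h h'
  have ⟨_, hwx, _, hxz, _⟩ := h.1
  have hwz : w ≤ z := hwx.le.trans hxz.le
  exact ((Set.Icc_eq_Icc_iff hwz).1 hIcc).1

theorem PropNTC.eq_or_eq (hNTC : PropNTC α) (hvee : IsVee w x y) (hwu : w ⋖ u) :
    u = x ∨ u = y := by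
  obtain ⟨hxy, hwx, hwy⟩ := hvee
  by_contra! hu
  exact hNTC ⟨w, x, y, u, hxy, hu.1.symm, hu.2.symm, hwx, hwy, hwu⟩

theorem IsDiamond.subset_Icc (h : IsDiamond w x y z) : {w, x, y, z} ⊆ Set.Icc w z := by
  obtain ⟨_, hwx, hwy, hxz, hyz⟩ := h
  have hwz : w ≤ z := hwx.le.trans hxz.le
  rintro c (rfl | rfl | rfl | rfl)
  exacts [⟨le_rfl, hwz⟩, ⟨hwx.le, hxz.le⟩, ⟨hwy.le, hyz.le⟩, ⟨hwz, le_rfl⟩]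

theorem PropNTC.propDAI [IsStronglyAtomic α] (hNTC : PropNTC α) : PropDAI α := by
  intro w x y z hdiamond
  have ⟨hxy, hwx, hwy, hxz, hyz⟩ := hdiamond
  refine Set.Subset.antisymm ?_ hdiamond.subset_Icc
  rintro c ⟨hwc, hcz⟩
  obtain rfl | hwc := hwc.eq_or_lt
  · exact Or.inl rfl
  obtain ⟨u, hwu, huc⟩ := exists_covBy_le_of_lt hwc
  obtain rfl | rfl := hNTC.eq_or_eq ⟨hxy, hwx, hwy⟩ hwu
  · obtain rfl | rfl := hxz.eq_or_eq huc hcz <;> simp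
  · obtain rfl | rfl := hyz.eq_or_eq huc hcz <;> simp

theorem PropDAI.axNCC (hDAI : PropDAI α) (hVT : AxVT α) (hD3MD : AxD3MD α) : AxNCC α := by
  rintro ⟨w, w', x, y, hww', hxy, hwx, hwy, hwx', hwy'⟩
  obtain ⟨z, hxz, hyz⟩ := hVT w x y ⟨hxy, hwx, hwy⟩
  have hdiamond : IsDiamond w x y z := ⟨hxy, hwx, hwy, hxz, hyz⟩
  have hdiamond' : IsDiamond w' x y z := ⟨hxy, hwx', hwy', hxz, hyz⟩
  exact hww' (hD3MD.min_eq ⟨hdiamond, hDAI _ _ _ _ hdiamond⟩ ⟨hdiamond', hDAI _ _ _ _ hdiamond'⟩)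

theorem stmt_6_general [IsStronglyAtomic α] (hVT : AxVT α) (hD3MD : AxD3MD α)
    (hNTC : PropNTC α) : AxNCC α :=
  hNTC.propDAI.axNCC hVT hD3MD

end

/-- Theorem 4.1(h): D3⁻C, D3MD, and NTC imply NCC. -/
theorem stmt_6 {α : Type*} [PartialOrder α] (hLF : ∀ a b : α, (Set.Icc a b).Finite)
    (hD3C : AxD3C α) (hD3MD : AxD3MD α) (hNTC : PropNTC α) : AxNCC α := by
  let := LocallyFiniteOrder.ofFiniteIcc hLF
  exact stmt_6_general hD3C.axVT hD3MD hNTC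

end DCompleteStmt
end

section
/- Theorem 4.1(i): If a locally finite partially ordered set satisfies Axiom D3MF and Axiom NCC, then it satisfies Axiom D3MD. -/
namespace DCompleteStmt

variable {α : Type*}

/-!
D3MF forces two d₃-intervals with the same maximum to have the same pair of elbows. Their minima
then lie below a common pair of distinct elements, so NCC identifies them.
-/

section

variable [PartialOrder α] {w w' x y x' y' z : α}

theorem IsVee.symm (h : IsVee w x y) : IsVee w y x :=
  ⟨h.1.symm, h.2.2, h.2.1⟩

theorem IsDiamond.isVee (h : IsDiamond w x y z) : IsVee w x y :=
  ⟨h.1, h.2.1, h.2.2.1⟩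

theorem AxNCC.eq_of_isVee (hNCC : AxNCC α) (h : IsVee w x y) (h' : IsVee w' x y) : w = w' := by
  by_contra hne
  exact hNCC ⟨w, w', x, y, hne, h.1, h.2.1, h.2.2, h'.2.1, h'.2.2⟩

theorem IsDiamond.elbows_eq_or_eq_swap (h : IsDiamond w x y z)
    (hz : ∀ u, u ⋖ z → u = x' ∨ u = y') : x = x' ∧ y = y' ∨ x = y' ∧ y = x' := by
  obtain ⟨hne, -, -, hxz, hyz⟩ := h
  have hx : x = x' ∨ x = y' := hz x hxz
  have hy : y = x' ∨ y = y' := hz y hyz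
  grind

theorem AxNCC.diamond_eq_of_covBy_top (hNCC : AxNCC α) (hz : ∀ u, u ⋖ z → u = x ∨ u = y)
    (h : IsVee w x y) (h' : IsDiamond w' x' y' z) :
    ({w, x, y, z} : Set α) = {w', x', y', z} := by
  obtain ⟨rfl, rfl⟩ | ⟨rfl, rfl⟩ := h'.elbows_eq_or_eq_swap hz
  · rw [hNCC.eq_of_isVee h h'.isVee]
  · rw [hNCC.eq_of_isVee h h'.isVee.symm, Set.insert_comm x' y']

end

theorem stmt_7_general {α : Type*} [PartialOrder α] (hD3MF : AxD3MF α) (hNCC : AxNCC α) :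
    AxD3MD α :=
  fun w x y z _ _ _ h h' ↦ hNCC.diamond_eq_of_covBy_top (hD3MF w x y z h) h.1.isVee h'.1

/-- Theorem 4.1(i): D3MF and NCC imply D3MD. -/
theorem stmt_7 {α : Type*} [PartialOrder α] (hLF : ∀ a b : α, (Set.Icc a b).Finite)
    (hD3MF : AxD3MF α) (hNCC : AxNCC α) : AxD3MD α :=
  stmt_7_general hD3MF hNCC

end DCompleteStmt
end
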